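/- Let k ≥ 1 be a fixed integer and set δ = 1 if k is odd and δ = 2 if k is even. For n ≥ 0 define the polynomial f_n(y) = Σ_{m∈P(n)} y^{B(m)} ∈ ℤ[y], and set f_n(y) = 0 for n < 0. Then for every n ≥ 4 one has, as an identity of polynomials in y: f_n(y) − 2·f_{n−1}(y) − f_{n−2}(y) + 2·f_{n−3}(y) − (y − 1)·(f_{n−(k+δ)}(y) − f_{n−(k+δ+1)}(y)) = 0. -/

import Mathlib

/-- The number of parts of a composition that are even and strictly greater than `k`. -/
def Bstat (k : ℕ) {n : ℕ} (m : Composition n) : ℕ :=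
  m.blocks.countP fun j => decide (Even j ∧ k < j)

def consComp (n : ℕ) (p : Σ i : Fin (n + 1), Composition (n - i)) : Composition (n + 1) where
  blocks := (p.1.1 + 1) :: p.2.blocks
  blocks_pos := by
    intro j hj
    rcases List.mem_cons.1 hj with h | h
    · omega
    · exact p.2.blocks_pos h
  blocks_sum := by
    rw [List.sum_cons, p.2.blocks_sum]
    have := p.1.2
    omega

theorem consComp_bij (n : ℕ) : Function.Bijective (consComp n) := by
  constructor
  · rintro ⟨i, c⟩ ⟨j, d⟩ h
    have h1 := congrArg Composition.blocks h
    simp only [consComp, List.cons.injEq] at h1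
    obtain ⟨h2, h3⟩ := h1
    have : i = j := by ext; omega
    subst this
    have : c = d := Composition.ext h3
    rw [this]
  · intro c
    obtain ⟨b, hp, hs⟩ := c
    cases b with
    | nil => simp at hs
    | cons a t =>
      have ha : 0 < a := hp (by simp)
      rw [List.sum_cons] at hs
      refine ⟨⟨⟨a - 1, by omega⟩, ⟨t, fun h => hp (by simp [h]), ?_⟩⟩, ?_⟩
      · show t.sum = n - (a - 1)
        omega
      · apply Composition.ext
        simp only [consComp, List.cons.injEq, and_true]
        omega

noncomputable def gpol (k n : ℕ) : Polynomial ℤ := ∑ m : Composition n, Polynomial.X ^ Bstat k m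

noncomputable def wpol (k j : ℕ) : Polynomial ℤ := if Even j ∧ k < j then Polynomial.X else 1

theorem gpol_succ (k n : ℕ) :
    gpol k (n + 1) = ∑ i ∈ Finset.range (n + 1), wpol k (i + 1) * gpol k (n - i) := by
  rw [gpol, ← (consComp_bij n).sum_comp, Fintype.sum_sigma, Finset.sum_range]
  apply Finset.sum_congr rfl
  intro i _
  rw [gpol, Finset.mul_sum]
  apply Finset.sum_congr rfl
  intro c _
  simp only [Bstat, consComp, List.countP_cons, wpol, pow_add]
  by_cases h : Even (i.1 + 1) ∧ k < i.1 + 1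
  · simp [h, mul_comm]
  · simp [mul_comm]

theorem gpol_rec (k e : ℕ) (hk : 1 ≤ k) (he : e = k + if Odd k then 1 else 2) (n : ℕ) :
    gpol k (n + 3) = gpol k (n + 2) + 2 * gpol k (n + 1)
      + (Polynomial.X - 1) * (if e ≤ n + 3 then gpol k (n + 3 - e) else 0) := by
  have hw : ∀ j, wpol k (j + 3) =
      wpol k (j + 1) + if j + 3 = e then Polynomial.X - 1 else 0 := by
    intro j
    unfold wpol
    split_ifs at * <;> first | ring1 | (exfalso; simp only [Nat.even_iff, Nat.odd_iff] at *; omega)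
  have hw1 : wpol k 1 = 1 := by simp [wpol]
  have hw2 : wpol k 2 = 1 + if 2 = e then Polynomial.X - 1 else 0 := by
    unfold wpol
    split_ifs at * <;> first | ring1 | (exfalso; clear hw hw1; grind)
  have he2 : 2 ≤ e := by split_ifs at he <;> omega
  have h1 := gpol_succ k n
  rw [gpol_succ k (n + 2), Finset.sum_range_succ', Finset.sum_range_succ']
  have h2 : ∀ i ∈ Finset.range (n + 1),
      wpol k (i + 1 + 1 + 1) * gpol k (n + 2 - (i + 1 + 1)) =
      wpol k (i + 1) * gpol k (n - i) +
        if i + 3 = e then (Polynomial.X - 1) * gpol k (n + 3 - e) else 0 := by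
    intro i _
    rw [hw i, show n + 2 - (i + 1 + 1) = n - i by omega]
    split_ifs with h
    · rw [show n + 3 - e = n - i by omega]; ring
    · ring
  rw [Finset.sum_congr rfl h2, Finset.sum_add_distrib, ← h1]
  simp only [zero_add, Nat.reduceAdd, hw1, hw2, Nat.sub_zero,
    show n + 2 - 1 = n + 1 by omega]
  by_cases hc : e = 2
  · subst hc
    simp
    ring
  · obtain ⟨d, rfl⟩ : ∃ d, e = d + 3 := ⟨e - 3, by omega⟩
    simp only [Nat.add_right_cancel_iff, Finset.sum_ite_eq', Finset.mem_range]
    rw [if_neg (by omega : ¬ (2 = d + 3))]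
    by_cases hd : d < n + 1
    · rw [if_pos hd, if_pos (by omega)]; ring
    · rw [if_neg hd, if_neg (by omega)]; ring

theorem stmt3 (k : ℕ) (hk : 1 ≤ k) (δ : ℕ) (hδ : δ = if Odd k then 1 else 2)
    (f : ℤ → Polynomial ℤ)
    (hf : ∀ n : ℤ, f n =
      if 0 ≤ n then ∑ m : Composition n.toNat, Polynomial.X ^ Bstat k m else 0)
    (n : ℤ) (hn : 4 ≤ n) :
    f n - 2 * f (n - 1) - f (n - 2) + 2 * f (n - 3)
        - (Polynomial.X - 1) * (f (n - (k + δ)) - f (n - (k + δ + 1))) = 0 := by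
  have hg : ∀ m : ℕ, f m = gpol k m := by
    intro m
    rw [hf, if_pos (by omega)]
    rfl
  have hr : ∀ m : ℤ, 3 ≤ m →
      f m = f (m - 1) + 2 * f (m - 2) + (Polynomial.X - 1) * f (m - (k + δ)) := by
    intro m hm
    obtain ⟨a, rfl⟩ : ∃ a : ℕ, m = ((a + 3 : ℕ) : ℤ) := ⟨(m - 3).toNat, by omega⟩
    rw [show ((a + 3 : ℕ) : ℤ) - 1 = ((a + 2 : ℕ) : ℤ) by push_cast; ring,
      show ((a + 3 : ℕ) : ℤ) - 2 = ((a + 1 : ℕ) : ℤ) by push_cast; ring, hg, hg, hg,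
      gpol_rec k (k + δ) hk (by rw [hδ]) a]
    congr 2
    split_ifs with h
    · rw [← hg]; congr 1; omega
    · rw [hf, if_neg (by omega)]
  have e1 := hr n (by omega)
  have e2 := hr (n - 1) (by omega)
  rw [show n - 1 - 1 = n - 2 by ring, show n - 1 - 2 = n - 3 by ring,
    show n - 1 - ((k : ℤ) + δ) = n - (k + δ + 1) by ring] at e2
  linear_combination e1 - e2
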